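/- arXiv:2102.03855 — 5 statements merged into one kernel-verified Lean document; each statement's English description precedes it below -/
import Mathlib

section
/- Let k ≥ 1 and n ≥ 2k+4 be integers. Then q(L_{n,k}) > q(L_{n,k+1}), where q denotes the signless Laplacian spectral radius. -/
open SimpleGraph

/-- `G` contains a cycle of length `l`. -/
def HasCycleLen {V : Type} (G : SimpleGraph V) (l : ℕ) : Prop :=
  ∃ (v : V) (c : G.Walk v v), c.IsCycle ∧ c.length = l

/-- The circumference of `G`: the length of a longest cycle. -/
noncomputable def circumference {V : Type} (G : SimpleGraph V) : ℕ :=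
  sSup {l | HasCycleLen G l}

/-- `G` is weakly pancyclic with girth 3: it contains a cycle of every length `l`
with `3 ≤ l ≤ c(G)`. -/
def WeaklyPancyclic3 {V : Type} (G : SimpleGraph V) : Prop :=
  HasCycleLen G 3 ∧ ∀ l : ℕ, 3 ≤ l → l ≤ circumference G → HasCycleLen G l

/-- The number of edges of `G`. -/
noncomputable def edgeCount {V : Type} (G : SimpleGraph V) : ℕ :=
  Nat.card G.edgeSet

/-- The degree of `v` in `G`. -/
noncomputable def degCount {V : Type} (G : SimpleGraph V) (v : V) : ℕ :=
  Nat.card (G.neighborSet v)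

/-- The spectral radius of `G`: the largest eigenvalue of the adjacency matrix. -/
noncomputable def specRad {V : Type} [Finite V] (G : SimpleGraph V) : ℝ :=
  letI := Fintype.ofFinite V
  letI := Classical.decEq V
  letI := Classical.decRel G.Adj
  sSup (spectrum ℝ (G.adjMatrix ℝ))

/-- The signless Laplacian spectral radius of `G`: the largest eigenvalue of `D(G) + A(G)`. -/
noncomputable def qSpecRad {V : Type} [Finite V] (G : SimpleGraph V) : ℝ :=
  letI := Fintype.ofFinite V
  letI := Classical.decEq V
  letI := Classical.decRel G.Adj
  sSup (spectrum ℝ (Matrix.diagonal (fun v => (degCount G v : ℝ)) + G.adjMatrix ℝ))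

/-- `L_{n,k} = K_1 ∨ (K_{n-k-1} + K_k)`: vertex `0` is the common vertex of a clique on
the `n - k` vertices `{0, …, n-k-1}` and a clique on the `k+1` vertices `{0} ∪ {n-k, …, n-1}`. -/
def Lgraph (n k : ℕ) : SimpleGraph (Fin n) :=
  SimpleGraph.fromRel (fun u v =>
    u.val = 0 ∨ v.val = 0 ∨ (u.val < n - k ∧ v.val < n - k) ∨
      (n - k ≤ u.val ∧ n - k ≤ v.val))

/-- `Γ_{n,t} = K_2 ∨ (K_{n-2-t} + t·K_1)`: vertices `0,1` are joined to everything,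
vertices `2, …, n-t-1` form a clique, and vertices `n-t, …, n-1` are independent. -/
def GammaGraph (n t : ℕ) : SimpleGraph (Fin n) :=
  SimpleGraph.fromRel (fun u v =>
    u.val < 2 ∨ v.val < 2 ∨ (u.val < n - t ∧ v.val < n - t))

/-- `F` is a member of the family `F_{n,k}`: there is a clique `K` on `n - k` vertices
such that each connected component of `F - K` is a clique all of whose vertices are
adjacent to one single common vertex of `K` and to no other vertex of `K`. -/
def MemF (n k : ℕ) (F : SimpleGraph (Fin n)) : Prop :=
  ∃ K : Finset (Fin n), K.card = n - k ∧ F.IsClique (↑K : Set (Fin n)) ∧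
    (∀ u v : ({x : Fin n | x ∉ K} : Set (Fin n)),
      (F.induce {x : Fin n | x ∉ K}).Reachable u v → (u = v ∨ F.Adj u.1 v.1)) ∧
    (∀ u : ({x : Fin n | x ∉ K} : Set (Fin n)), ∃! w : Fin n, w ∈ K ∧ F.Adj u.1 w) ∧
    (∀ u v : ({x : Fin n | x ∉ K} : Set (Fin n)),
      (F.induce {x : Fin n | x ∉ K}).Reachable u v →
        ∀ w ∈ K, F.Adj u.1 w → F.Adj v.1 w)

/-- `G` is a subgraph of `H` (up to relabelling): there is an injective graph
homomorphism from `G` to `H`. -/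
def IsSubgraphOf {n : ℕ} (G H : SimpleGraph (Fin n)) : Prop :=
  ∃ f : G →g H, Function.Injective f

open Classical in
theorem isGreatest_spec {V : Type} [Fintype V] [DecidableEq V] [Nonempty V]
    (M : Matrix V V ℝ) (hM : ∀ i j, 0 ≤ M i j) (x : V → ℝ) (hx : ∀ v, 0 < x v) (q : ℝ)
    (h : M.mulVec x = q • x) : IsGreatest (spectrum ℝ M) q := by
  constructor
  · rw [← Matrix.spectrum_toLin', ← Module.End.hasEigenvalue_iff_mem_spectrum]
    apply Module.End.hasEigenvalue_of_hasEigenvector (x := x)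
    refine ⟨?_, ?_⟩
    · rw [Module.End.mem_eigenspace_iff, Matrix.toLin'_apply, h]
    · intro h0
      obtain ⟨v⟩ := ‹Nonempty V›
      have := hx v
      rw [h0] at this
      simp at this
  · intro μ hμ
    rw [← Matrix.spectrum_toLin', ← Module.End.hasEigenvalue_iff_mem_spectrum] at hμ
    obtain ⟨y, hy⟩ := hμ.exists_hasEigenvector
    have hy1 := hy.apply_eq_smul
    rw [Matrix.toLin'_apply] at hy1
    obtain ⟨i, -, hi⟩ := Finset.exists_max_image Finset.univ (fun v => |y v| / x v)
      Finset.univ_nonempty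
    set c := |y i| / x i with hc
    have hb : ∀ j, |y j| ≤ c * x j := fun j => by
      have := hi j (Finset.mem_univ j)
      rwa [div_le_iff₀ (hx j)] at this
    have hci : |y i| = c * x i := by rw [hc]; field_simp [(hx i).ne']
    have hcpos : 0 < c := by
      by_contra hcn
      apply hy.2
      funext j
      have h1 := hb j
      have h2 : c * x j ≤ 0 := mul_nonpos_of_nonpos_of_nonneg (not_lt.mp hcn) (hx j).le
      exact abs_nonpos_iff.mp (h1.trans h2)
    have e1 : ∑ j, M i j * y j = μ * y i := by
      have := congrFun hy1 i
      simpa [Matrix.mulVec, dotProduct] using this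
    have e2 : ∑ j, M i j * x j = q * x i := by
      have := congrFun h i
      simpa [Matrix.mulVec, dotProduct] using this
    have h3 : |μ| * |y i| ≤ c * (q * x i) := by
      rw [← abs_mul, ← e1, ← e2, Finset.mul_sum]
      refine (Finset.abs_sum_le_sum_abs _ _).trans (Finset.sum_le_sum fun j _ => ?_)
      rw [abs_mul, abs_of_nonneg (hM i j)]
      nlinarith [mul_le_mul_of_nonneg_left (hb j) (hM i j)]
    rw [hci] at h3
    have h4 : 0 < c * x i := mul_pos hcpos (hx i)
    have h5 : |μ| ≤ q := by
      by_contra hh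
      push Not at hh
      nlinarith
    exact (le_abs_self μ).trans h5

open Classical in
theorem qSpecRad_eq {n : ℕ} [NeZero n] (G : SimpleGraph (Fin n)) (x : Fin n → ℝ)
    (hx : ∀ v, 0 < x v) (q : ℝ)
    (h : ∀ i, ∑ j, (if G.Adj i j then x i + x j else 0) = q * x i) : qSpecRad G = q := by
  unfold qSpecRad
  have : Fintype.ofFinite (Fin n) = Fin.fintype n := Subsingleton.elim _ _
  apply IsGreatest.csSup_eq
  rw [this]
  apply @isGreatest_spec (Fin n) (Fin.fintype n) (Classical.decEq (Fin n)) _ _ _ x hx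
  · funext i
    rw [Matrix.add_mulVec]
    simp only [Pi.add_apply, Matrix.mulVec_diagonal, Pi.smul_apply, smul_eq_mul]
    rw [← h i]
    have hd : (degCount G i : ℝ) = ∑ j, (if G.Adj i j then (1:ℝ) else 0) := by
      rw [Finset.sum_boole, degCount, Nat.card_eq_fintype_card, SimpleGraph.card_neighborSet_eq_degree, ← SimpleGraph.card_neighborFinset_eq_degree]
      congr 2
      ext j
      simp
    rw [hd, Finset.sum_mul, Matrix.mulVec, dotProduct, ← Finset.sum_add_distrib]
    refine Finset.sum_congr rfl fun j _ => ?_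
    by_cases hj : G.Adj i j <;> simp [hj, SimpleGraph.adjMatrix_apply]
  · intro i j
    rw [Matrix.add_apply, @Matrix.diagonal_apply _ _ (Classical.decEq (Fin n)), SimpleGraph.adjMatrix_apply]
    have : (0:ℝ) ≤ degCount G i := Nat.cast_nonneg _
    split_ifs <;> linarith

open Classical in
theorem q_L_eq (a b : ℕ) (ha : 1 ≤ a) (hab : b < a) (q : ℝ) (hq : 2 * (a:ℝ) - 1 < q)
    (hP : (q - (a + b)) * (q + 1 - 2 * a) * (q + 1 - 2 * b) - a * (q + 1 - 2 * b)
      - b * (q + 1 - 2 * a) = 0) :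
    qSpecRad (Lgraph (a + b + 1) b) = q := by
  have hab' : (b:ℝ) < a := by exact_mod_cast hab
  have hA : 0 < q + 1 - 2 * a := by linarith
  have hB : 0 < q + 1 - 2 * b := by linarith
  set f : ℕ → ℝ := fun v => if v = 0 then (q + 1 - 2 * a) * (q + 1 - 2 * b) else
    if v < a + 1 then q + 1 - 2 * b else q + 1 - 2 * a with hf
  apply qSpecRad_eq _ (fun v => f v.val)
  · intro v
    simp only [hf]
    split_ifs <;> positivity
  · intro i
    have hnk : a + b + 1 - b = a + 1 := by omega
    set R : ℕ → Prop := fun j => i.val = 0 ∨ j = 0 ∨ (i.val < a + 1 ∧ j < a + 1) ∨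
      (a + 1 ≤ i.val ∧ a + 1 ≤ j) with hR
    have h1 : ∀ j : Fin (a + b + 1), (if (Lgraph (a + b + 1) b).Adj i j then f i.val + f j.val else 0)
        = (if R j.val then f i.val + f j.val else 0) - (if j = i then 2 * f i.val else 0) := by
      intro j
      by_cases hji : j = i
      · subst hji
        have : R j.val := by simp only [hR]; omega
        simp [this, two_mul]
      · have : (Lgraph (a + b + 1) b).Adj i j ↔ R j.val := by
          simp only [Lgraph, SimpleGraph.fromRel_adj, hR, hnk]
          have : i ≠ j := fun h => hji h.symm
          constructor
          · rintro ⟨-, h⟩; omega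
          · intro h; exact ⟨this, Or.inl h⟩
        simp [this, hji]
    rw [Finset.sum_congr rfl fun j _ => h1 j, Finset.sum_sub_distrib, Finset.sum_ite_eq']
    simp only [Finset.mem_univ, if_true]
    rw [Fin.sum_univ_eq_sum_range (fun j => if R j then f i.val + f j else 0) (a + b + 1)]
    have hsplit : ∀ g : ℕ → ℝ, ∀ c d : ℝ, (∀ j < a, g (j + 1) = c) → (∀ j < b, g (a + j + 1) = d) →
        ∑ j ∈ Finset.range (a + b + 1), g j = g 0 + a * c + b * d := by
      intro g c d hc hd
      rw [Finset.sum_range_succ', Finset.sum_range_add,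
        Finset.sum_congr rfl fun j hj => hc j (Finset.mem_range.mp hj),
        Finset.sum_congr rfl fun j hj => hd j (Finset.mem_range.mp hj)]
      simp
      ring
    have f0 : f 0 = (q + 1 - 2 * a) * (q + 1 - 2 * b) := by simp [hf]
    have fa : ∀ j < a, f (j + 1) = q + 1 - 2 * b := by
      intro j hj; simp [hf, hj]
    have fb : ∀ j, f (a + j + 1) = q + 1 - 2 * a := by
      intro j; simp [hf]
    rcases Nat.eq_zero_or_pos i.val with hi | hi
    · rw [hsplit _ (f 0 + (q + 1 - 2 * b)) (f 0 + (q + 1 - 2 * a))]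
      · simp only [hR, hi, true_or, if_true, f0]
        linear_combination (-1) * hP
      · intro j hj
        simp [hR, hi, fa j hj]
      · intro j hj
        simp [hR, hi, fb j]
    · by_cases hi2 : i.val < a + 1
      · have hfi : f i.val = q + 1 - 2 * b := by
          have := fa (i.val - 1) (by omega)
          rwa [Nat.sub_add_cancel hi] at this
        rw [hsplit _ (f i.val + (q + 1 - 2 * b)) 0]
        · simp only [hR, true_or, or_true, if_true, f0, hfi]
          ring
        · intro j hj
          have : R (j + 1) := by simp only [hR]; omega
          simp only [this, if_true, fa j hj]
        · intro j hj
          have : ¬ R (a + j + 1) := by simp only [hR]; omega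
          simp only [this, if_false]
      · have hfi : f i.val = q + 1 - 2 * a := by
          have := fb (i.val - 1 - a)
          rwa [show a + (i.val - 1 - a) + 1 = i.val by omega] at this
        rw [hsplit _ 0 (f i.val + (q + 1 - 2 * a))]
        · simp only [hR, true_or, or_true, if_true, f0, hfi]
          ring
        · intro j hj
          have : ¬ R (j + 1) := by simp only [hR]; omega
          simp only [this, if_false]
        · intro j hj
          have : R (a + j + 1) := by simp only [hR]; omega
          simp only [this, if_true, fb j]

theorem exists_root (a b r : ℝ) (ha : 0 < a) (hb : 0 < b)
    (hr : r ≤ 2 * a + 2 * b)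
    (hP : (r - (a + b)) * (r + 1 - 2 * a) * (r + 1 - 2 * b) - a * (r + 1 - 2 * b)
      - b * (r + 1 - 2 * a) < 0) :
    ∃ q, r < q ∧ q ≤ 2 * a + 2 * b ∧
      (q - (a + b)) * (q + 1 - 2 * a) * (q + 1 - 2 * b) - a * (q + 1 - 2 * b)
      - b * (q + 1 - 2 * a) = 0 := by
  set F : ℝ → ℝ := fun q => (q - (a + b)) * (q + 1 - 2 * a) * (q + 1 - 2 * b)
    - a * (q + 1 - 2 * b) - b * (q + 1 - 2 * a) with hF
  have hc : ContinuousOn F (Set.Icc r (2 * a + 2 * b)) := by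
    apply Continuous.continuousOn
    fun_prop
  have h2 : 0 ≤ F (2 * a + 2 * b) := by
    have : F (2 * a + 2 * b) = a * (2 * a + 1) * (2 * b) + b * (2 * b + 1) * (2 * a) := by
      simp only [hF]; ring
    rw [this]; positivity
  obtain ⟨q, ⟨hq1, hq2⟩, hq⟩ := intermediate_value_Icc hr hc ⟨le_of_lt hP, h2⟩
  refine ⟨q, lt_of_le_of_ne hq1 ?_, hq2, hq⟩
  rintro rfl
  exact absurd hq hP.ne

theorem poly_neg (a b q : ℝ) (hab : b + 2 < a) (hb : 0 < b) (hq : 2 * a - 1 < q)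
    (hP : (q - (a + b)) * (q + 1 - 2 * (a - 1)) * (q + 1 - 2 * (b + 1))
      - (a - 1) * (q + 1 - 2 * (b + 1)) - (b + 1) * (q + 1 - 2 * (a - 1)) = 0) :
    (q - (a + b)) * (q + 1 - 2 * a) * (q + 1 - 2 * b) - a * (q + 1 - 2 * b)
      - b * (q + 1 - 2 * a) < 0 := by
  have h1 : 0 < q + 1 - 2 * a := by linarith
  have h2 : 0 < q + 1 - 2 * b := by linarith
  have h3 : 0 < q + 1 - 2 * (a - 1) := by linarith
  have h4 : 0 < q + 1 - 2 * (b + 1) := by linarith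
  have e : q - (a + b) = (a - 1) / (q + 1 - 2 * (a - 1)) + (b + 1) / (q + 1 - 2 * (b + 1)) := by
    rw [div_add_div _ _ h3.ne' h4.ne', eq_div_iff (mul_pos h3 h4).ne']
    linear_combination hP
  have key : (a - 1) / (q + 1 - 2 * (a - 1)) + (b + 1) / (q + 1 - 2 * (b + 1))
      < a / (q + 1 - 2 * a) + b / (q + 1 - 2 * b) := by
    have d1 : a / (q + 1 - 2 * a) - (a - 1) / (q + 1 - 2 * (a - 1))
        = (q + 1) / ((q + 1 - 2 * a) * (q + 1 - 2 * (a - 1))) := by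
      rw [div_sub_div _ _ h1.ne' h3.ne']; congr 1; ring
    have d2 : (b + 1) / (q + 1 - 2 * (b + 1)) - b / (q + 1 - 2 * b)
        = (q + 1) / ((q + 1 - 2 * (b + 1)) * (q + 1 - 2 * b)) := by
      rw [div_sub_div _ _ h4.ne' h2.ne']; congr 1; ring
    have d3 : (q + 1) / ((q + 1 - 2 * (b + 1)) * (q + 1 - 2 * b))
        < (q + 1) / ((q + 1 - 2 * a) * (q + 1 - 2 * (a - 1))) := by
      apply div_lt_div_of_pos_left (by linarith) (mul_pos h1 h3)
      apply mul_lt_mul'' <;> linarith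
    linarith
  rw [← e] at key
  have := mul_lt_mul_of_pos_right key (mul_pos h1 h2)
  have e2 : (a / (q + 1 - 2 * a) + b / (q + 1 - 2 * b)) * ((q + 1 - 2 * a) * (q + 1 - 2 * b))
      = a * (q + 1 - 2 * b) + b * (q + 1 - 2 * a) := by
    rw [div_add_div _ _ h1.ne' h2.ne', div_mul_cancel₀ _ (mul_pos h1 h2).ne']
    ring
  rw [e2] at this
  linarith

/-- Lemma 3.6: `q(L_{n,k}) > q(L_{n,k+1})` for `n ≥ 2k+4`. -/
theorem qSpecRad_L_lt (n k : ℕ) (hk : 1 ≤ k) (hn : 2 * k + 4 ≤ n) :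
    qSpecRad (Lgraph n (k + 1)) < qSpecRad (Lgraph n k) := by
  obtain ⟨c, rfl⟩ : ∃ c, n = (c + 1) + k + 1 := ⟨n - k - 2, by omega⟩
  have hck : k + 2 ≤ c := by omega
  have hk' : (1:ℝ) ≤ k := by exact_mod_cast hk
  have hc' : (k:ℝ) + 2 ≤ c := by exact_mod_cast hck
  obtain ⟨q', hq1, hq2, hq3⟩ := exists_root (c:ℝ) ((k + 1 : ℕ) : ℝ) (2 * c - 1) (by linarith)
    (by positivity) (by push_cast; linarith) (by push_cast; nlinarith)
  have hL' := q_L_eq c (k + 1) (by omega) (by omega) q' hq1 hq3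
  rw [show c + (k + 1) + 1 = c + 1 + k + 1 by ring] at hL'
  rw [hL']
  push_cast at hq2 hq3
  by_cases hcase : 2 * ((c:ℝ) + 1) - 1 < q'
  · obtain ⟨q, h1, h2, h3⟩ := exists_root ((c:ℝ) + 1) (k:ℝ) q' (by linarith) (by linarith)
      (by linarith) (poly_neg _ _ _ (by linarith) (by linarith) hcase (by
        linear_combination hq3))
    rw [q_L_eq (c + 1) k (by omega) (by omega) q (by push_cast; linarith)
      (by push_cast; exact h3)]
    exact h1
  · obtain ⟨q, h1, h2, h3⟩ := exists_root ((c:ℝ) + 1) (k:ℝ) (2 * ((c:ℝ) + 1) - 1)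
      (by linarith) (by linarith) (by linarith) (by nlinarith)
    rw [q_L_eq (c + 1) k (by omega) (by omega) q (by push_cast; linarith)
      (by push_cast; exact h3)]
    linarith
end

section
/- For every integer n ≥ 6, ρ(L_{n,1}) > ρ(Γ_{n,2}), where ρ denotes the spectral radius. -/
open SimpleGraph

theorem specRad_eq_aux {n : ℕ} (G : SimpleGraph (Fin n)) [DecidableRel G.Adj] :
    specRad G = sSup (spectrum ℝ (G.adjMatrix ℝ)) := by
  have key : ∀ (i1 i2 : Fintype (Fin n)) (d1 d2 : DecidableEq (Fin n))
      (r1 r2 : DecidableRel G.Adj),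
      sSup (@spectrum ℝ (Matrix (Fin n) (Fin n) ℝ) _ (@Matrix.instRing _ _ i1 d1 _)
        (@Matrix.instAlgebra _ _ _ i1 d1 _ _ _) (@SimpleGraph.adjMatrix ℝ (Fin n) G r1 _ _)) =
      sSup (@spectrum ℝ (Matrix (Fin n) (Fin n) ℝ) _ (@Matrix.instRing _ _ i2 d2 _)
        (@Matrix.instAlgebra _ _ _ i2 d2 _ _ _) (@SimpleGraph.adjMatrix ℝ (Fin n) G r2 _ _)) := by
    intro i1 i2 d1 d2 r1 r2
    obtain rfl : i1 = i2 := Subsingleton.elim _ _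
    obtain rfl : d1 = d2 := Subsingleton.elim _ _
    obtain rfl : r1 = r2 := Subsingleton.elim _ _
    rfl
  exact key _ _ _ _ _ _

/-- Weighted row-sum bound for real eigenvalues of a nonnegative matrix. -/
theorem mem_spectrum_le_aux {n : ℕ} (A : Matrix (Fin n) (Fin n) ℝ) (hA : ∀ i j, 0 ≤ A i j)
    (w : Fin n → ℝ) (hw : ∀ i, 0 < w i) (c : ℝ)
    (h : ∀ i, ∑ j, A i j * w j ≤ c * w i) (μ : ℝ) (hμ : μ ∈ spectrum ℝ A) : μ ≤ c := by
  rw [← Matrix.spectrum_toLin', ← Module.End.hasEigenvalue_iff_mem_spectrum] at hμ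
  obtain ⟨v, hv⟩ := hμ.exists_hasEigenvector
  have hv0 := hv.2
  have hve : ∀ i, ∑ j, A i j * v j = μ * v i := by
    intro i
    have := congrFun hv.apply_eq_smul i
    simpa [Matrix.toLin'_apply, Matrix.mulVec, dotProduct] using this
  obtain ⟨i0, hi0⟩ : ∃ i, v i ≠ 0 := by
    by_contra hcon
    push Not at hcon
    exact hv0 (funext hcon)
  obtain ⟨i, -, hi⟩ := Finset.exists_max_image Finset.univ (fun j => |v j| / w j)
    ⟨i0, Finset.mem_univ _⟩
  set t := |v i| / w i with ht
  have htpos : 0 < t :=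
    lt_of_lt_of_le (div_pos (abs_pos.2 hi0) (hw i0)) (hi i0 (Finset.mem_univ _))
  have hle : ∀ j, |v j| ≤ t * w j := fun j => (div_le_iff₀ (hw j)).1 (hi j (Finset.mem_univ _))
  have hvi : |v i| = t * w i := by rw [ht, div_mul_cancel₀ _ (hw i).ne']
  have h1 : |μ| * |v i| ≤ t * (c * w i) := by
    rw [← abs_mul, ← hve i]
    calc |∑ j, A i j * v j| ≤ ∑ j, |A i j * v j| := Finset.abs_sum_le_sum_abs _ _
      _ ≤ ∑ j, t * (A i j * w j) := by
        refine Finset.sum_le_sum fun j _ => ?_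
        rw [abs_mul, abs_of_nonneg (hA i j)]
        nlinarith [mul_le_mul_of_nonneg_left (hle j) (hA i j)]
      _ = t * ∑ j, A i j * w j := by rw [Finset.mul_sum]
      _ ≤ _ := mul_le_mul_of_nonneg_left (h i) htpos.le
  rw [hvi] at h1
  have h2 : 0 < t * w i := mul_pos htpos (hw i)
  have h3 : |μ| ≤ c := le_of_mul_le_mul_right (by linarith) h2
  exact (le_abs_self _).trans h3

theorem gamma_upper_aux (k : ℕ) (hk : 2 ≤ k) :
    specRad (GammaGraph (k + 4) 2) ≤ (k : ℝ) + 2 - 1 / 4 := by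
  classical
  have hk' : (2 : ℝ) ≤ k := by exact_mod_cast hk
  rw [specRad_eq_aux]
  refine Real.sSup_le ?_ (by linarith)
  intro μ hμ
  refine mem_spectrum_le_aux _ ?_
    (fun i => if i.val < 2 then 12 else if i.val < k + 2 then 9 else 7) ?_ _ ?_ μ hμ
  · intro i j
    rw [SimpleGraph.adjMatrix_apply]
    split_ifs <;> norm_num
  · intro i
    split_ifs <;> norm_num
  · intro i
    have hi := i.isLt
    have tot : ∀ a b c : ℝ, ∑ j : Fin (k + 4),
        (if j.val < 2 then a else if j.val < k + 2 then b else c) = 2 * a + k * b + 2 * c := by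
      intro a b c
      rw [Fin.sum_univ_eq_sum_range
        (fun j => if j < 2 then a else if j < k + 2 then b else c) (k + 4)]
      rw [Finset.sum_range_succ, Finset.sum_range_succ, Finset.sum_range_succ',
        Finset.sum_range_succ']
      rw [Finset.sum_congr rfl (g := fun _ => b)]
      · simp
        ring
      · intro j hj
        have := Finset.mem_range.1 hj
        rw [if_neg (by omega), if_pos (by omega)]
    have hadj : ∀ j, (GammaGraph (k + 4) 2).Adj i j ↔
        i ≠ j ∧ (i.val < 2 ∨ j.val < 2 ∨ (i.val < k + 2 ∧ j.val < k + 2)) := by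
      intro j
      simp only [GammaGraph, SimpleGraph.fromRel_adj]
      have : k + 4 - 2 = k + 2 := by omega
      rw [this]
      tauto
    simp only [SimpleGraph.adjMatrix_apply, hadj]
    have hd : ∀ d : ℝ, ∑ j : Fin (k + 4), (if i = j then d else 0) = d := by
      intro d; simp
    rcases lt_or_ge i.val 2 with h1 | h1
    · rw [if_pos h1]
      have : ∀ j : Fin (k + 4), (if i ≠ j ∧ (i.val < 2 ∨ j.val < 2 ∨
          (i.val < k + 2 ∧ j.val < k + 2)) then (1 : ℝ) else 0) *
          (if j.val < 2 then 12 else if j.val < k + 2 then 9 else 7) =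
          (if j.val < 2 then 12 else if j.val < k + 2 then 9 else 7)
          - (if i = j then 12 else 0) := by
        intro j
        by_cases hij : i = j
        · subst hij; simp [h1]
        · simp [hij, h1]
      rw [Finset.sum_congr rfl (fun j _ => this j), Finset.sum_sub_distrib, tot, hd]
      linarith
    · rw [if_neg (by omega)]
      rcases lt_or_ge i.val (k + 2) with h2 | h2
      · rw [if_pos h2]
        have : ∀ j : Fin (k + 4), (if i ≠ j ∧ (i.val < 2 ∨ j.val < 2 ∨
            (i.val < k + 2 ∧ j.val < k + 2)) then (1 : ℝ) else 0) *
            (if j.val < 2 then 12 else if j.val < k + 2 then 9 else 7) =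
            (if j.val < 2 then 12 else if j.val < k + 2 then 9 else 0)
            - (if i = j then 9 else 0) := by
          intro j
          by_cases hij : i = j
          · subst hij; simp [h2, not_lt.2 h1]
          · by_cases a : j.val < 2 <;> by_cases b : j.val < k + 2 <;>
              simp [hij, h2, not_lt.2 h1, a, b]
        rw [Finset.sum_congr rfl (fun j _ => this j), Finset.sum_sub_distrib, tot, hd]
        linarith
      · rw [if_neg (by omega)]
        have : ∀ j : Fin (k + 4), (if i ≠ j ∧ (i.val < 2 ∨ j.val < 2 ∨
            (i.val < k + 2 ∧ j.val < k + 2)) then (1 : ℝ) else 0) *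
            (if j.val < 2 then 12 else if j.val < k + 2 then 9 else 7) =
            (if j.val < 2 then 12 else if j.val < k + 2 then 0 else 0) := by
          intro j
          by_cases a : j.val < 2
          · have hij : i ≠ j := by rintro rfl; omega
            simp [hij, a]
          · simp [a, not_lt.2 h1, not_lt.2 h2]
        rw [Finset.sum_congr rfl (fun j _ => this j), tot]
        linarith

theorem lgraph_lower_aux (k : ℕ) (hk : 2 ≤ k) :
    (k : ℝ) + 2 ≤ specRad (Lgraph (k + 4) 1) := by
  classical
  have hk' : (2 : ℝ) ≤ k := by exact_mod_cast hk
  rw [specRad_eq_aux]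
  obtain ⟨l, ⟨hl1, hl2⟩, hl⟩ : ∃ l ∈ Set.Icc ((k : ℝ) + 2) (k + 3),
      (l ^ 2 - 1) * (l - (k + 1)) - (k + 2) * l = 0 := by
    have := intermediate_value_Icc (a := (k : ℝ) + 2) (b := k + 3) (by linarith)
      (f := fun l : ℝ => (l ^ 2 - 1) * (l - (k + 1)) - (k + 2) * l) (by fun_prop)
    obtain ⟨l, h, h'⟩ := this (show (0 : ℝ) ∈ Set.Icc _ _ by
      constructor
      · ring_nf; norm_num
      · nlinarith)
    exact ⟨l, h, h'⟩
  refine hl1.trans (le_csSup ?_ ?_)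
  · exact (Matrix.finite_real_spectrum).bddAbove
  rw [← Matrix.spectrum_toLin', ← Module.End.hasEigenvalue_iff_mem_spectrum]
  set x := l * (l - (k + 1)) with hx
  set z := l - (k + 1) with hz
  refine Module.End.hasEigenvalue_of_hasEigenvector
    (x := fun i : Fin (k + 4) => if i.val = 0 then x else if i.val < k + 3 then l else z) ⟨?_, ?_⟩
  · rw [Module.End.mem_eigenspace_iff]
    funext i
    have hi := i.isLt
    rw [Matrix.toLin'_apply, Matrix.mulVec, dotProduct]
    have tot : ∀ a b c : ℝ, ∑ j : Fin (k + 4),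
        (if j.val = 0 then a else if j.val < k + 3 then b else c) = a + (k + 2) * b + c := by
      intro a b c
      rw [Fin.sum_univ_eq_sum_range
        (fun j => if j = 0 then a else if j < k + 3 then b else c) (k + 4)]
      rw [Finset.sum_range_succ, Finset.sum_range_succ']
      rw [Finset.sum_congr rfl (g := fun _ => b)]
      · simp
        ring
      · intro j hj
        have := Finset.mem_range.1 hj
        rw [if_neg (by omega), if_pos (by omega)]
    have hadj : ∀ j, (Lgraph (k + 4) 1).Adj i j ↔
        i ≠ j ∧ (i.val = 0 ∨ j.val = 0 ∨ (i.val < k + 3 ∧ j.val < k + 3)) := by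
      intro j
      have hj := j.isLt
      simp only [Lgraph, SimpleGraph.fromRel_adj, ne_eq, Fin.ext_iff]
      omega
    simp only [SimpleGraph.adjMatrix_apply, hadj, Pi.smul_apply, smul_eq_mul]
    have hd : ∀ d : ℝ, ∑ j : Fin (k + 4), (if i = j then d else 0) = d := by
      intro d; simp
    by_cases h1 : i.val = 0
    · rw [if_pos h1]
      have : ∀ j : Fin (k + 4), (if i ≠ j ∧ (i.val = 0 ∨ j.val = 0 ∨
          (i.val < k + 3 ∧ j.val < k + 3)) then (1 : ℝ) else 0) *
          (if j.val = 0 then x else if j.val < k + 3 then l else z) =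
          (if j.val = 0 then x else if j.val < k + 3 then l else z)
          - (if i = j then x else 0) := by
        intro j
        by_cases hij : i = j
        · subst hij; simp [h1]
        · simp [hij, h1]
      rw [Finset.sum_congr rfl (fun j _ => this j), Finset.sum_sub_distrib, tot, hd]
      rw [hx, hz]
      linarith
    · rw [if_neg h1]
      by_cases h2 : i.val < k + 3
      · rw [if_pos h2]
        have : ∀ j : Fin (k + 4), (if i ≠ j ∧ (i.val = 0 ∨ j.val = 0 ∨
            (i.val < k + 3 ∧ j.val < k + 3)) then (1 : ℝ) else 0) *
            (if j.val = 0 then x else if j.val < k + 3 then l else z) =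
            (if j.val = 0 then x else if j.val < k + 3 then l else 0)
            - (if i = j then l else 0) := by
          intro j
          by_cases hij : i = j
          · subst hij; simp only [ne_eq, not_true, false_and, if_false, if_neg h1, if_pos h2]; simp
          · by_cases a : j.val = 0 <;> by_cases b : j.val < k + 3 <;>
              simp only [ne_eq, hij, h1, h2, a, b] <;> simp
        rw [Finset.sum_congr rfl (fun j _ => this j), Finset.sum_sub_distrib, tot, hd]
        rw [hx, hz]
        ring
      · rw [if_neg h2]
        have : ∀ j : Fin (k + 4), (if i ≠ j ∧ (i.val = 0 ∨ j.val = 0 ∨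
            (i.val < k + 3 ∧ j.val < k + 3)) then (1 : ℝ) else 0) *
            (if j.val = 0 then x else if j.val < k + 3 then l else z) =
            (if j.val = 0 then x else if j.val < k + 3 then 0 else 0) := by
          intro j
          by_cases a : j.val = 0
          · have hij : i ≠ j := by rintro rfl; exact h1 a
            simp only [ne_eq, hij, a]; simp
          · simp only [a, h1, h2]; simp
        rw [Finset.sum_congr rfl (fun j _ => this j), tot]
        rw [hx, hz]
        ring
  · intro h0
    have := congrFun h0 ⟨1, by omega⟩
    simp at this
    linarith

/-- Lemma 3.6: `ρ(L_{n,1}) > ρ(Γ_{n,2})` for `n ≥ 6`. -/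
theorem specRad_Gamma2_lt (n : ℕ) (hn : 6 ≤ n) :
    specRad (GammaGraph n 2) < specRad (Lgraph n 1) := by
  obtain ⟨k, rfl⟩ : ∃ k, n = k + 4 := ⟨n - 4, by omega⟩
  have h1 := gamma_upper_aux k (by omega)
  have h2 := lgraph_lower_aux k (by omega)
  linarith
end

section
/- For every integer n ≥ 6, q(L_{n,1}) > q(Γ_{n,2}), where q denotes the signless Laplacian spectral radius. -/
open SimpleGraph

lemma spec_le_of_weights {n : ℕ} (M : Matrix (Fin n) (Fin n) ℝ) (w : Fin n → ℝ) (c : ℝ)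
    (hM : ∀ i j, 0 ≤ M i j) (hw : ∀ i, 0 < w i) (h : ∀ i, ∑ j, M i j * w j ≤ c * w i)
    (μ : ℝ) (hμ : μ ∈ spectrum ℝ M) : μ ≤ c := by
  rw [← Matrix.spectrum_toLin', ← Module.End.hasEigenvalue_iff_mem_spectrum] at hμ
  obtain ⟨v, hv⟩ := hμ.exists_hasEigenvector
  have he : ∀ i, ∑ j, M i j * v j = μ * v i := by
    intro i
    have := congrFun hv.apply_eq_smul i
    simpa [Matrix.toLin'_apply, Matrix.mulVec, dotProduct] using this
  obtain ⟨k, hk⟩ := Function.ne_iff.mp hv.2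
  obtain ⟨i, -, hi⟩ := Finset.exists_max_image Finset.univ (fun i => |v i| / w i)
    ⟨k, Finset.mem_univ k⟩
  set t := |v i| / w i with ht
  have htpos : 0 < t := lt_of_lt_of_le (div_pos (abs_pos.mpr hk) (hw k)) (hi k (Finset.mem_univ k))
  have hvi : |v i| = t * w i := by rw [ht]; field_simp [(hw i).ne']
  have hb : ∀ j, |v j| ≤ t * w j := fun j => (div_le_iff₀ (hw j)).mp (hi j (Finset.mem_univ j))
  have h1 : |μ| * |v i| ≤ t * (c * w i) := by
    rw [← abs_mul, ← he i]
    calc |∑ j, M i j * v j| ≤ ∑ j, |M i j * v j| := Finset.abs_sum_le_sum_abs _ _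
      _ ≤ ∑ j, t * (M i j * w j) := by
        apply Finset.sum_le_sum
        intro j _
        rw [abs_mul, abs_of_nonneg (hM i j)]
        nlinarith [mul_le_mul_of_nonneg_left (hb j) (hM i j)]
      _ = t * ∑ j, M i j * w j := by rw [Finset.mul_sum]
      _ ≤ _ := mul_le_mul_of_nonneg_left (h i) htpos.le
  rw [hvi] at h1
  have h2 : |μ| * (t * w i) ≤ c * (t * w i) := by linarith
  exact (le_abs_self μ).trans (le_of_mul_le_mul_right h2 (mul_pos htpos (hw i)))

lemma mem_spec_of_vec {n : ℕ} (M : Matrix (Fin n) (Fin n) ℝ) (v : Fin n → ℝ) (c : ℝ)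
    (hv : v ≠ 0) (h : ∀ i, ∑ j, M i j * v j = c * v i) : c ∈ spectrum ℝ M := by
  rw [← Matrix.spectrum_toLin', ← Module.End.hasEigenvalue_iff_mem_spectrum]
  refine Module.End.hasEigenvalue_of_hasEigenvector (x := v) ⟨?_, hv⟩
  rw [Module.End.mem_eigenspace_iff]
  ext i
  simpa [Matrix.toLin'_apply, Matrix.mulVec, dotProduct] using h i

open Classical in
lemma row_sum {n : ℕ} (G : SimpleGraph (Fin n)) (f : Fin n → ℝ) (i : Fin n) :
    ∑ j, (Matrix.diagonal (fun v => (degCount G v : ℝ)) + G.adjMatrix ℝ) i j * f j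
      = ∑ j, if G.Adj i j then f i + f j else 0 := by
  have hd : (degCount G i : ℝ) = ∑ j, if G.Adj i j then (1 : ℝ) else 0 := by
    rw [degCount, Nat.card_eq_fintype_card, SimpleGraph.card_neighborSet_eq_degree,
      ← SimpleGraph.card_neighborFinset_eq_degree, SimpleGraph.neighborFinset_eq_filter]
    simp
  simp only [Matrix.add_apply, add_mul, Finset.sum_add_distrib, Matrix.diagonal_apply,
    SimpleGraph.adjMatrix_apply, ite_mul, zero_mul, one_mul, Finset.sum_ite_eq, Finset.mem_univ,
    if_true]
  rw [hd, Finset.sum_mul, ← Finset.sum_add_distrib]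
  refine Finset.sum_congr rfl fun j _ => ?_
  split_ifs <;> simp

lemma sum_split (m : ℕ) (f : ℕ → ℝ) (c : ℝ) (hc : ∀ k, 2 ≤ k → k < m + 2 → f k = c) :
    ∑ j : Fin (m + 4), f j.val = f 0 + f 1 + m * c + f (m + 2) + f (m + 3) := by
  rw [Fin.sum_univ_eq_sum_range, Finset.sum_range_succ, Finset.sum_range_succ,
    Finset.sum_range_succ', Finset.sum_range_succ']
  rw [Finset.sum_congr rfl (g := fun _ => c)]
  · simp; ring
  · intro k hk
    have := Finset.mem_range.mp hk
    exact hc _ (by omega) (by omega)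

/-- Sum over the neighbours `j ≠ i` satisfying `P`. -/
lemma sum_ne {n : ℕ} (i : Fin n) (P : ℕ → Prop) [DecidablePred P] (g : ℕ → ℝ) (hP : P i.val) :
    (∑ j : Fin n, if i ≠ j ∧ P j.val then g j.val else 0)
      = (∑ j : Fin n, if P j.val then g j.val else 0) - g i.val := by
  have : g i.val = ∑ j : Fin n, if i = j then g j.val else 0 := by simp
  rw [this, ← Finset.sum_sub_distrib]
  refine Finset.sum_congr rfl fun j _ => ?_
  by_cases h : i = j
  · subst h; simp [hP]
  · simp [h]

lemma gamma_adj (n : ℕ) (i j : Fin n) : (GammaGraph n 2).Adj i j ↔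
    i ≠ j ∧ (i.val < 2 ∨ j.val < 2 ∨ (i.val < n - 2 ∧ j.val < n - 2)) := by
  simp only [GammaGraph, SimpleGraph.fromRel_adj]; tauto

lemma L_adj (n : ℕ) (i j : Fin n) : (Lgraph n 1).Adj i j ↔
    i ≠ j ∧ (i.val = 0 ∨ j.val = 0 ∨ (i.val < n - 1 ∧ j.val < n - 1) ∨
      (n - 1 ≤ i.val ∧ n - 1 ≤ j.val)) := by
  simp only [Lgraph, SimpleGraph.fromRel_adj]; tauto

open Classical in
lemma gamma_row (m : ℕ) (hm : 2 ≤ m) (w : ℕ → ℝ)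
    (hw : w = fun k => if k < 2 then 6 else if k < m + 2 then 3 else 2) (i : Fin (m + 4)) :
    (∑ j : Fin (m + 4), if (GammaGraph (m + 4) 2).Adj i j then w i.val + w j.val else 0)
      ≤ (2 * m + 4) * w i.val := by
  have hm' : (2 : ℝ) ≤ m := by exact_mod_cast hm
  have w0 : w 0 = 6 := by simp [hw]
  have w1 : w 1 = 6 := by simp [hw]
  have w2 : ∀ k, 2 ≤ k → k < m + 2 → w k = 3 := by
    intro k h1 h2; simp only [hw]; rw [if_neg (by omega), if_pos h2]
  have w3 : w (m + 2) = 2 := by simp [hw]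
  have w4 : w (m + 3) = 2 := by simp [hw]
  simp only [gamma_adj]
  rcases lt_or_ge i.val 2 with h | h
  · have hwi : w i.val = 6 := by simp only [hw]; rw [if_pos h]
    rw [sum_ne i (fun k => i.val < 2 ∨ k < 2 ∨ (i.val < m + 4 - 2 ∧ k < m + 4 - 2))
      (fun k => w i.val + w k) (Or.inl h)]
    rw [sum_split m (fun k => if i.val < 2 ∨ k < 2 ∨ (i.val < m + 4 - 2 ∧ k < m + 4 - 2) then
      w i.val + w k else 0) 9]
    · simp only [h, true_or, if_true, hwi, w0, w1, w3, w4]; nlinarith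
    · intro k h1 h2
      simp only [h, true_or, if_true, hwi, w2 k h1 h2]; norm_num
  · rcases lt_or_ge i.val (m + 2) with h' | h'
    · have hwi : w i.val = 3 := w2 _ h h'
      rw [sum_ne i (fun k => i.val < 2 ∨ k < 2 ∨ (i.val < m + 4 - 2 ∧ k < m + 4 - 2))
        (fun k => w i.val + w k) (by simp; omega)]
      rw [sum_split m (fun k => if i.val < 2 ∨ k < 2 ∨ (i.val < m + 4 - 2 ∧ k < m + 4 - 2) then
        w i.val + w k else 0) 6]
      · rw [if_pos (by omega), if_pos (by omega), if_neg (by omega), if_neg (by omega)]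
        simp only [hwi, w0, w1]; nlinarith
      · intro k h1 h2
        rw [if_pos (by omega)]
        simp only [hwi, w2 k h1 h2]; norm_num
    · have hwi : w i.val = 2 := by
        simp only [hw]; rw [if_neg (by omega), if_neg (by omega)]
      have : (∑ j : Fin (m + 4), if i ≠ j ∧ (i.val < 2 ∨ j.val < 2 ∨
          (i.val < m + 4 - 2 ∧ j.val < m + 4 - 2)) then w i.val + w j.val else 0)
          = ∑ j : Fin (m + 4), (fun k => if k < 2 then w i.val + w k else 0) j.val := by
        refine Finset.sum_congr rfl fun j _ => ?_
        refine if_congr ?_ rfl rfl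
        rw [ne_eq, Fin.ext_iff]; omega
      rw [this, sum_split m (fun k => if k < 2 then w i.val + w k else 0) 0]
      · rw [if_pos (by omega), if_pos (by omega), if_neg (by omega), if_neg (by omega)]
        simp only [hwi, w0, w1]; nlinarith
      · intro k h1 h2
        rw [if_neg (by omega)]

open Classical in
lemma L_row (m : ℕ) (q x z : ℝ)
    (hx : q * x = (m + 3) * x + (m + 2) + z) (hy : q = (2 * m + 3) + x) (hz : q * z = z + x)
    (w : ℕ → ℝ)
    (hw : w = fun k => if k = 0 then x else if k < m + 3 then 1 else z) (i : Fin (m + 4)) :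
    (∑ j : Fin (m + 4), if (Lgraph (m + 4) 1).Adj i j then w i.val + w j.val else 0)
      = q * w i.val := by
  have w0 : w 0 = x := by simp [hw]
  have w2 : ∀ k, 1 ≤ k → k < m + 3 → w k = 1 := by
    intro k h1 h2; simp only [hw]; rw [if_neg (by omega), if_pos h2]
  have w4 : w (m + 3) = z := by simp [hw]
  simp only [L_adj]
  rcases Nat.eq_zero_or_pos i.val with h | h
  · rw [sum_ne i (fun k => i.val = 0 ∨ k = 0 ∨ (i.val < m + 4 - 1 ∧ k < m + 4 - 1) ∨
      (m + 4 - 1 ≤ i.val ∧ m + 4 - 1 ≤ k)) (fun k => w i.val + w k) (Or.inl h)]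
    rw [sum_split m (fun k => if i.val = 0 ∨ k = 0 ∨ (i.val < m + 4 - 1 ∧ k < m + 4 - 1) ∨
      (m + 4 - 1 ≤ i.val ∧ m + 4 - 1 ≤ k) then w i.val + w k else 0) (x + 1)]
    · simp only [h, true_or, if_true, w0, w4, w2 1 (by omega) (by omega),
        w2 (m + 2) (by omega) (by omega)]; linarith
    · intro k h1 h2
      simp only [h, true_or, if_true, w0, w2 k (by omega) (by omega)]
  · rcases lt_or_ge i.val (m + 3) with h' | h'
    · have hwi : w i.val = 1 := w2 _ h h'
      rw [sum_ne i (fun k => i.val = 0 ∨ k = 0 ∨ (i.val < m + 4 - 1 ∧ k < m + 4 - 1) ∨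
        (m + 4 - 1 ≤ i.val ∧ m + 4 - 1 ≤ k)) (fun k => w i.val + w k) (by simp; omega)]
      rw [sum_split m (fun k => if i.val = 0 ∨ k = 0 ∨ (i.val < m + 4 - 1 ∧ k < m + 4 - 1) ∨
        (m + 4 - 1 ≤ i.val ∧ m + 4 - 1 ≤ k) then w i.val + w k else 0) 2]
      · rw [if_pos (by omega), if_pos (by omega), if_pos (by omega), if_neg (by omega)]
        simp only [hwi, w0, w2 1 (by omega) (by omega), w2 (m + 2) (by omega) (by omega)]
        linarith
      · intro k h1 h2
        rw [if_pos (by omega)]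
        simp only [hwi, w2 k (by omega) (by omega)]; norm_num
    · have hi : i.val = m + 3 := by omega
      have hwi : w i.val = z := by rw [hi, w4]
      have : (∑ j : Fin (m + 4), if i ≠ j ∧ (i.val = 0 ∨ j.val = 0 ∨
          (i.val < m + 4 - 1 ∧ j.val < m + 4 - 1) ∨ (m + 4 - 1 ≤ i.val ∧ m + 4 - 1 ≤ j.val))
            then w i.val + w j.val else 0)
          = ∑ j : Fin (m + 4), (fun k => if k = 0 then w i.val + w k else 0) j.val := by
        refine Finset.sum_congr rfl fun j _ => ?_
        refine if_congr ?_ rfl rfl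
        rw [ne_eq, Fin.ext_iff]; omega
      rw [this, sum_split m (fun k => if k = 0 then w i.val + w k else 0) 0]
      · rw [if_pos rfl, if_neg one_ne_zero, if_neg (by omega), if_neg (by omega)]
        simp only [hwi, w0]; linarith
      · intro k h1 h2
        rw [if_neg (by omega)]

lemma exists_q (m : ℕ) : ∃ q x z : ℝ, (2 * m + 4 : ℝ) < q ∧
    q * x = (m + 3) * x + (m + 2) + z ∧ q = (2 * m + 3) + x ∧ q * z = z + x := by
  have hm : (0 : ℝ) ≤ m := Nat.cast_nonneg m
  let F : ℝ → ℝ := fun q => (q - (m + 3)) * (q - (2 * m + 3)) * (q - 1)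
    - (m + 2) * (q - 1) - (q - (2 * m + 3))
  have hF : ContinuousOn F (Set.Icc (2 * m + 4) (2 * m + 8)) := by
    apply Continuous.continuousOn; fun_prop
  have h0 : (0 : ℝ) ∈ Set.Ioo (F (2 * m + 4)) (F (2 * m + 8)) := by
    constructor
    · simp only [F]; nlinarith
    · simp only [F]; nlinarith
  obtain ⟨q, ⟨hq, -⟩, hq0⟩ := intermediate_value_Ioo (by linarith) hF h0
  have hq1 : q - 1 ≠ 0 := by intro h; linarith
  refine ⟨q, q - (2 * m + 3), (q - (2 * m + 3)) / (q - 1), hq, ?_, by ring, ?_⟩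
  · simp only [F] at hq0
    field_simp
    linarith
  · field_simp
    ring

open Classical in
lemma qSpecRad_eq_s15 {n : ℕ} (G : SimpleGraph (Fin n)) : qSpecRad G =
    sSup (spectrum ℝ (Matrix.diagonal (fun v => (degCount G v : ℝ)) + G.adjMatrix ℝ)) := by
  unfold qSpecRad
  congr!

/-- Lemma 3.6: `q(L_{n,1}) > q(Γ_{n,2})` for `n ≥ 6`. -/
theorem qSpecRad_Gamma2_lt (n : ℕ) (hn : 6 ≤ n) :
    qSpecRad (GammaGraph n 2) < qSpecRad (Lgraph n 1) := by
  obtain ⟨m, rfl⟩ : ∃ m, n = m + 4 := ⟨n - 4, by omega⟩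
  have hm : 2 ≤ m := by omega
  classical
  have hG : qSpecRad (GammaGraph (m + 4) 2) ≤ 2 * m + 4 := by
    rw [qSpecRad_eq_s15]
    refine Real.sSup_le ?_ (by positivity)
    intro μ hμ
    refine spec_le_of_weights _
      (fun i => (fun k : ℕ => if k < 2 then (6 : ℝ) else if k < m + 2 then 3 else 2) i.val) _
      ?_ ?_ ?_ μ (by convert hμ)
    · intro i j
      simp only [Matrix.add_apply, Matrix.diagonal_apply, SimpleGraph.adjMatrix_apply]
      split_ifs <;> positivity
    · intro i
      simp only []
      split_ifs <;> norm_num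
    · intro i
      have := gamma_row m hm _ rfl i
      rw [← row_sum (GammaGraph (m + 4) 2) (fun i => (fun k : ℕ => if k < 2 then (6 : ℝ) else if k < m + 2 then 3 else 2) i.val)] at this
      convert this
  obtain ⟨q, x, z, hq, hx, hy, hz⟩ := exists_q m
  refine hG.trans_lt (hq.trans_le ?_)
  rw [qSpecRad_eq_s15]
  refine le_csSup (Matrix.finite_spectrum _).bddAbove ?_
  have key := L_row m q x z hx hy hz _ rfl
  have := mem_spec_of_vec (Matrix.diagonal (fun v => (degCount (Lgraph (m + 4) 1) v : ℝ)) + (Lgraph (m + 4) 1).adjMatrix ℝ)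
    (fun i => (fun k : ℕ => if k = 0 then x else if k < m + 3 then 1 else z) i.val) q ?_ ?_
  · convert this
  · intro h
    have := congrFun h ⟨1, by omega⟩
    simp at this
  · intro i
    rw [row_sum]
    convert key i
end

section
/- Let G be a simple graph on n ≥ 1 vertices containing no cycle of even length. Then e(G) ≤ 3(n−1)/2. -/
open SimpleGraph

namespace EvenCyc

variable {V : Type}

theorem cyc (G : SimpleGraph V) {a b x : V} (q : G.Walk a b) (hq : q.IsPath) (hab : a ≠ b)
    (hx : x ∉ q.support) (h1 : G.Adj x a) (h2 : G.Adj b x) : HasCycleLen G (q.length + 2) := by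
  refine ⟨x, Walk.cons h1 (q.concat h2), ?_, by simp⟩
  rw [Walk.cons_isCycle_iff]
  refine ⟨hq.concat hx h2, ?_⟩
  rw [Walk.edges_concat]
  intro hm
  rw [List.concat_eq_append, List.mem_append] at hm
  rcases hm with hm | hm
  · exact hx (Walk.fst_mem_support_of_mem_edges q hm)
  · simp only [List.mem_singleton, Sym2.eq_iff] at hm
    rcases hm with ⟨h, _⟩ | ⟨_, h⟩
    · exact h2.ne h.symm
    · exact hab h

/-- `p 0, ..., p k` is a path. -/
def IsP (G : SimpleGraph V) (k : ℕ) (p : ℕ → V) : Prop :=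
  (∀ i, i < k → G.Adj (p i) (p (i + 1))) ∧ ∀ i j, i ≤ k → j ≤ k → p i = p j → i = j

theorem seg_up (G : SimpleGraph V) {k : ℕ} {p : ℕ → V} (hp : IsP G k p) (d : ℕ) :
    ∀ a, a + d ≤ k → ∃ q : G.Walk (p a) (p (a + d)), q.IsPath ∧ q.length = d ∧
      ∀ x ∈ q.support, ∃ m, a ≤ m ∧ m ≤ a + d ∧ x = p m := by
  induction d with
  | zero =>
    intro a ha
    refine ⟨Walk.nil, by simp, by simp, ?_⟩
    intro x hx
    exact ⟨a, le_rfl, by simp, by simpa using hx⟩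
  | succ d ih =>
    intro a ha
    obtain ⟨q, hq, hl, hs⟩ := ih a (by omega)
    have hadj := hp.1 (a + d) (by omega)
    refine ⟨q.concat hadj, ?_, by simp [hl], ?_⟩
    · refine hq.concat ?_ hadj
      intro hm
      obtain ⟨m, h1, h2, h3⟩ := hs _ hm
      have := hp.2 _ _ (by omega) (by omega) h3
      omega
    · intro x hx
      rw [Walk.support_concat, List.mem_append] at hx
      rcases hx with hx | hx
      · obtain ⟨m, h1, h2, h3⟩ := hs _ hx
        exact ⟨m, h1, by omega, h3⟩
      · exact ⟨a + (d + 1), by omega, by omega, by simpa using hx⟩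

theorem seg (G : SimpleGraph V) {k : ℕ} {p : ℕ → V} (hp : IsP G k p) (a b : ℕ)
    (ha : a ≤ k) (hb : b ≤ k) : ∃ q : G.Walk (p a) (p b), q.IsPath ∧
      (q.length + a = b ∨ q.length + b = a) ∧
      ∀ x ∈ q.support, ∃ m, min a b ≤ m ∧ m ≤ max a b ∧ x = p m := by
  rcases le_total a b with h | h
  · obtain ⟨d, rfl⟩ := Nat.exists_eq_add_of_le h
    obtain ⟨q, hq, hl, hs⟩ := seg_up G hp d a hb
    refine ⟨q, hq, by omega, fun x hx => ?_⟩
    obtain ⟨m, h1, h2, h3⟩ := hs x hx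
    exact ⟨m, by omega, by omega, h3⟩
  · obtain ⟨d, rfl⟩ := Nat.exists_eq_add_of_le h
    obtain ⟨q, hq, hl, hs⟩ := seg_up G hp d b ha
    refine ⟨q.reverse, hq.reverse, by rw [Walk.length_reverse]; omega, fun x hx => ?_⟩
    obtain ⟨m, h1, h2, h3⟩ := hs x (by simpa using hx)
    exact ⟨m, by omega, by omega, h3⟩

/-- Apex over a segment. -/
theorem apex (G : SimpleGraph V) (h : ∀ l : ℕ, Even l → ¬ HasCycleLen G l)
    {k : ℕ} {p : ℕ → V} (hp : IsP G k p) {a b : ℕ} (hab : a < b) (hb : b ≤ k) {x : V}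
    (hx : ∀ m, a ≤ m → m ≤ b → x ≠ p m) (h1 : G.Adj x (p a)) (h2 : G.Adj x (p b)) :
    (b - a) % 2 = 1 := by
  obtain ⟨q, hq, hl, hs⟩ := seg G hp a b (by omega) hb
  have hc := cyc G q hq (fun e => by have := hp.2 _ _ (by omega) hb e; omega)
    (fun hm => by
      obtain ⟨m, h1, h2, h3⟩ := hs _ hm
      exact hx m (by omega) (by omega) h3) h1 h2.symm
  by_contra hne
  exact h _ (by rw [Nat.even_iff]; omega) hc

theorem two (G : SimpleGraph V) (h : ∀ l : ℕ, Even l → ¬ HasCycleLen G l)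
    {k : ℕ} {p : ℕ → V} (hp : IsP G k p) {i j : ℕ} (hi : 2 ≤ i) (hj : 2 ≤ j) (hik : i ≤ k)
    (hjk : j ≤ k) (h0 : G.Adj (p 0) (p i)) (h1 : G.Adj (p 1) (p j)) : (i + j) % 2 = 0 := by
  obtain ⟨q, hq, hl, hs⟩ := seg G hp j i (by omega) (by omega)
  have hns : ∀ m, m < 2 → p m ∉ q.support := by
    intro m hm hmem
    obtain ⟨m', h1, h2, h3⟩ := hs _ hmem
    have := hp.2 _ _ (by omega) (by omega) h3
    omega
  have h01 : G.Adj (p 0) (p 1) := hp.1 0 (by omega)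
  have hc := cyc G (Walk.cons h1 q) (hq.cons (hns 1 (by omega)))
    (fun e => by have := hp.2 _ _ (by omega) hik e; omega)
    (x := p 0) (by
      rw [Walk.support_cons, List.mem_cons]
      rintro (e | e)
      · exact h01.ne e
      · exact hns 0 (by omega) e) h01 h0.symm
  by_contra hne
  exact h _ (by rw [Nat.even_iff, Walk.length_cons]; omega) hc

theorem three (G : SimpleGraph V) (h : ∀ l : ℕ, Even l → ¬ HasCycleLen G l)
    {k : ℕ} {p : ℕ → V} (hp : IsP G k p) {i j : ℕ} (hi : 2 ≤ i) (hj : 2 ≤ j) (hik : i ≤ k)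
    (hjk : j ≤ k) (h0 : G.Adj (p 0) (p i)) {x : V} (hx : ∀ m, m ≤ k → x ≠ p m)
    (h1 : G.Adj (p 1) x) (h2 : G.Adj x (p j)) : (i + j) % 2 = 1 := by
  obtain ⟨q, hq, hl, hs⟩ := seg G hp j i (by omega) (by omega)
  have hns : ∀ m, m < 2 → p m ∉ q.support := by
    intro m hm hmem
    obtain ⟨m', h1, h2, h3⟩ := hs _ hmem
    have := hp.2 _ _ (by omega) (by omega) h3
    omega
  have hxs : x ∉ q.support := by
    intro hmem
    obtain ⟨m', h1, h2, h3⟩ := hs _ hmem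
    exact hx m' (by omega) h3
  have h01 : G.Adj (p 0) (p 1) := hp.1 0 (by omega)
  have hc := cyc G (Walk.cons h1 (Walk.cons h2 q))
    ((hq.cons hxs).cons (by
      rw [Walk.support_cons, List.mem_cons]
      rintro (e | e)
      · exact h1.ne e
      · exact hns 1 (by omega) e))
    (fun e => by have := hp.2 _ _ (by omega) hik e; omega)
    (x := p 0) (by
      rw [Walk.support_cons, List.mem_cons, Walk.support_cons, List.mem_cons]
      rintro (e | e | e)
      · exact h01.ne e
      · exact hx 0 (by omega) e.symm
      · exact hns 0 (by omega) e) h01 h0.symm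
  by_contra hne
  exact h _ (by rw [Nat.even_iff, Walk.length_cons, Walk.length_cons]; omega) hc

theorem exists_longest [Fintype V] (G : SimpleGraph V) {u v : V} (huv : G.Adj u v) :
    ∃ k p, 1 ≤ k ∧ IsP G k p ∧ ∀ k' p', IsP G k' p' → k' ≤ k := by
  classical
  have hbd : ∀ k p, IsP G k p → k ≤ Fintype.card V := by
    intro k p hp
    have hinj : Function.Injective (fun i : Fin (k + 1) => p i) := by
      intro i j e
      exact Fin.ext (hp.2 _ _ (by omega) (by omega) e)
    have := Fintype.card_le_of_injective _ hinj
    simp at this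
    omega
  have h1 : IsP G 1 (fun i => if i = 0 then u else v) := by
    constructor
    · intro i hi
      obtain rfl : i = 0 := by omega
      simpa using huv
    · intro i j hi hj e
      have := huv.ne
      have := huv.ne.symm
      by_cases hi0 : i = 0 <;> by_cases hj0 : j = 0 <;> simp_all <;> omega
  let Q : ℕ → Prop := fun k => ∃ p, IsP G k p
  have hQ := Nat.findGreatest_spec (P := Q) (hbd 1 _ h1) ⟨_, h1⟩
  obtain ⟨p, hp⟩ := hQ
  refine ⟨_, p, ?_, hp, ?_⟩
  · exact Nat.le_findGreatest (hbd 1 _ h1) ⟨_, h1⟩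
  · intro k' p' hp'
    exact Nat.le_findGreatest (hbd k' _ hp') ⟨_, hp'⟩

theorem start_nbr (G : SimpleGraph V) {k : ℕ} {p : ℕ → V} (hp : IsP G k p)
    (hmax : ∀ k' p', IsP G k' p' → k' ≤ k) {y : V} (hy : G.Adj (p 0) y) :
    ∃ m, 1 ≤ m ∧ m ≤ k ∧ y = p m := by
  by_contra hno
  push Not at hno
  have hno' : ∀ m, m ≤ k → y ≠ p m := by
    intro m hm
    rcases Nat.eq_zero_or_pos m with rfl | h
    · exact hy.ne.symm
    · exact hno m h hm
  have : IsP G (k + 1) (fun i => Nat.casesOn i y p) := by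
    constructor
    · intro i hi
      cases i with
      | zero => exact hy.symm
      | succ i => exact hp.1 i (by omega)
    · intro i j hi hj e
      cases i <;> cases j
      · rfl
      · exact absurd e (hno' _ (by omega))
      · exact absurd e.symm (hno' _ (by omega))
      · rw [hp.2 _ _ (by omega) (by omega) e]
  have := hmax _ _ this
  omega

/-- Structure: every vertex with a neighbour having another one leads to two adjacent
vertices of degree 2. -/
theorem struct [Fintype V] (G : SimpleGraph V) (h : ∀ l : ℕ, Even l → ¬ HasCycleLen G l)
    {u v : V} (huv : G.Adj u v) (hdeg : ∀ y z, G.Adj y z → ∃ z', z' ≠ z ∧ G.Adj y z') :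
    ∃ a b c d, G.Adj a b ∧ c ≠ b ∧ d ≠ a ∧ (∀ y, G.Adj a y ↔ y = b ∨ y = c) ∧
      (∀ y, G.Adj b y ↔ y = a ∨ y = d) := by
  obtain ⟨k, p, hk, hp, hmax⟩ := exists_longest G huv
  have h01 : G.Adj (p 0) (p 1) := hp.1 0 (by omega)
  obtain ⟨z, hz, h0z⟩ := hdeg _ _ h01
  obtain ⟨i, hi1, hik, rfl⟩ := start_nbr G hp hmax h0z
  have hi2 : 2 ≤ i := by
    rcases Nat.lt_or_ge i 2 with hlt | hge
    · obtain rfl : i = 1 := by omega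
      exact absurd rfl hz
    · exact hge
  have h0ne : ∀ m, 1 ≤ m → m ≤ k → p 0 ≠ p m := by
    intro m hm hmk e
    have := hp.2 _ _ (by omega) hmk e
    omega
  have par : ∀ m, 2 ≤ m → m ≤ k → G.Adj (p 0) (p m) → m % 2 = 0 := by
    intro m hm hmk hadj
    have := apex G h hp (a := 1) (b := m) (by omega) hmk
      (fun t h1 h2 => h0ne t h1 (by omega)) h01 hadj
    omega
  have hie := par i hi2 hik h0z
  have no2 : ∀ a b, 2 ≤ a → a < b → b ≤ k → G.Adj (p 0) (p a) → G.Adj (p 0) (p b) → False := by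
    intro a b ha hab hb h1 h2
    have := apex G h hp hab hb (fun t h1 h2 => h0ne t (by omega) (by omega)) h1 h2
    have := par a ha (by omega) h1
    have := par b (by omega) hb h2
    omega
  have h12 : G.Adj (p 1) (p 2) := hp.1 1 (by omega)
  refine ⟨p 0, p 1, p i, p 2, h01, hz, (h0ne 2 (by omega) (by omega)).symm, ?_, ?_⟩
  · intro y
    constructor
    · intro hy
      obtain ⟨m, hm1, hmk, rfl⟩ := start_nbr G hp hmax hy
      rcases Nat.lt_or_ge m 2 with hlt | hge
      · left
        obtain rfl : m = 1 := by omega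
        rfl
      · right
        rcases lt_trichotomy m i with hlt | rfl | hgt
        · exact (no2 m i hge hlt hik hy h0z).elim
        · rfl
        · exact (no2 i m hi2 hgt hmk h0z hy).elim
    · rintro (rfl | rfl)
      · exact h01
      · exact h0z
  · intro y
    constructor
    · intro hy
      by_cases hon : ∃ m, m ≤ k ∧ y = p m
      · obtain ⟨m, hmk, rfl⟩ := hon
        rcases Nat.lt_or_ge m 3 with hlt | hge
        · interval_cases m
          · left; rfl
          · exact absurd rfl hy.ne
          · right; rfl
        · exfalso
          have e1 := apex G h hp (a := 2) (b := m) (x := p 1) (by omega) hmk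
            (fun t h1 h2 e => by
              have := hp.2 _ _ (by omega) (by omega) e
              omega) h12 hy
          have e2 := two G h hp hi2 (by omega) hik hmk h0z hy
          omega
      · exfalso
        push Not at hon
        have hp' : IsP G k (Function.update p 0 y) := by
          constructor
          · intro t ht
            rcases Nat.eq_zero_or_pos t with rfl | hpos
            · simpa using hy.symm
            · rw [Function.update_of_ne (by omega), Function.update_of_ne (by omega)]
              exact hp.1 t ht
          · intro s t hs ht e
            rcases Nat.eq_zero_or_pos s with rfl | hs0 <;>
              rcases Nat.eq_zero_or_pos t with rfl | ht0
            · rfl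
            · rw [Function.update_self, Function.update_of_ne (by omega)] at e
              exact absurd e (hon t ht)
            · rw [Function.update_self, Function.update_of_ne (by omega)] at e
              exact absurd e.symm (hon s hs)
            · rw [Function.update_of_ne (by omega), Function.update_of_ne (by omega)] at e
              exact hp.2 _ _ hs ht e
        obtain ⟨w, hw, hyw⟩ := hdeg _ _ hy.symm
        obtain ⟨j, hj1, hjk, rfl⟩ := start_nbr G hp' hmax (y := w) (by simpa using hyw)
        rw [Function.update_of_ne (by omega)] at hw hyw
        have hj2 : 2 ≤ j := by
          rcases Nat.lt_or_ge j 2 with hlt | hge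
          · obtain rfl : j = 1 := by omega
            exact absurd rfl hw
          · exact hge
        have e1 := apex G h hp (a := 1) (b := j) (x := y) (by omega) hjk
          (fun t h1 h2 => hon t (by omega)) hy.symm hyw
        have e2 := three G h hp hi2 hj2 hik hjk h0z hon hy hyw
        omega
    · rintro (rfl | rfl)
      · exact h01.symm
      · exact h12

theorem hasCycleLen_mono {G H : SimpleGraph V} (hle : G ≤ H) {l : ℕ} (hc : HasCycleLen G l) :
    HasCycleLen H l := by
  obtain ⟨v, c, hc, hl⟩ := hc
  exact ⟨v, c.mapLe hle, hc.mapLe hle, by simpa using hl⟩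

open Classical in
theorem main [Fintype V] (s : ℕ) : ∀ (S : Finset V) (G : SimpleGraph V), S.card = s →
    (∀ l : ℕ, Even l → ¬ HasCycleLen G l) → (∀ u v, G.Adj u v → u ∈ S) → S.Nonempty →
    2 * edgeCount G + 3 ≤ 3 * S.card := by
  induction s using Nat.strong_induction_on with
  | _ s ih =>
  intro S G hs h hS hne
  by_cases hE : ∃ u v, G.Adj u v
  swap
  · have : G = ⊥ := by
      ext u v
      simp only [bot_adj, iff_false]
      exact fun e => hE ⟨u, v, e⟩
    subst this
    have := hne.card_pos
    have h0 : edgeCount (⊥ : SimpleGraph V) = 0 := by simp [edgeCount]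
    omega
  obtain ⟨u, v, huv⟩ := hE
  have sup : ∀ (H : SimpleGraph V) (T : Finset V) (a : V), (∀ u v, H.Adj u v → u ∈ T) →
      ∀ u v, (H.deleteIncidenceSet a).Adj u v → u ∈ T.erase a := by
    intro H T a hT u v huv
    rw [deleteIncidenceSet_adj] at huv
    exact Finset.mem_erase.2 ⟨huv.2.1, hT _ _ huv.1⟩
  have cnt : ∀ (H : SimpleGraph V) (a : V),
      edgeCount H ≤ edgeCount (H.deleteIncidenceSet a) + degCount H a := by
    intro H a
    have := card_edgeFinset_deleteIncidenceSet H a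
    have e1 : edgeCount H = H.edgeFinset.card := by
      rw [edgeCount, Nat.card_eq_fintype_card, edgeFinset_card]
    have e2 : edgeCount (H.deleteIncidenceSet a) = (H.deleteIncidenceSet a).edgeFinset.card := by
      rw [edgeCount, Nat.card_eq_fintype_card, edgeFinset_card]
    have e3 : degCount H a = H.degree a := by
      rw [degCount, Nat.card_eq_fintype_card, card_neighborSet_eq_degree]
    have h' : edgeCount (H.deleteIncidenceSet a) = H.edgeFinset.card - H.degree a := by
      rw [e2]
      convert this
    omega
  have dle : ∀ (H : SimpleGraph V) (a : V) (T : Finset V), (∀ y, H.Adj a y → y ∈ T) →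
      degCount H a ≤ T.card := by
    intro H a T hT
    rw [degCount, Nat.card_eq_fintype_card, card_neighborSet_eq_degree,
      ← card_neighborFinset_eq_degree]
    refine Finset.card_le_card fun y hy => hT y ?_
    simpa using hy
  by_cases hdeg : ∀ y z, G.Adj y z → ∃ z', z' ≠ z ∧ G.Adj y z'
  · obtain ⟨a, b, c, d, hab, hcb, hda, ha, hb⟩ := struct G h huv hdeg
    have hac : G.Adj a c := (ha c).2 (Or.inr rfl)
    have da : degCount G a ≤ 2 :=
      (dle G a {b, c} (by intro y hy; simpa [ha] using hy)).trans Finset.card_le_two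
    have db : degCount (G.deleteIncidenceSet a) b ≤ 1 := by
      refine (dle _ b {d} ?_).trans (by simp)
      intro y hy
      rw [deleteIncidenceSet_adj, hb] at hy
      rw [Finset.mem_singleton]
      tauto
    have c1 := cnt G a
    have c2 := cnt (G.deleteIncidenceSet a) b
    have haS := hS _ _ hab
    have hbS : b ∈ S.erase a := Finset.mem_erase.2 ⟨hab.ne.symm, hS _ _ hab.symm⟩
    have hcS : c ∈ (S.erase a).erase b :=
      Finset.mem_erase.2 ⟨hcb, Finset.mem_erase.2 ⟨hac.ne.symm, hS _ _ hac.symm⟩⟩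
    have k1 := Finset.card_erase_add_one haS
    have k2 := Finset.card_erase_add_one hbS
    have := ih ((S.erase a).erase b).card (by omega) ((S.erase a).erase b)
      ((G.deleteIncidenceSet a).deleteIncidenceSet b) rfl
      (fun l hl hc => h l hl (hasCycleLen_mono
        ((deleteIncidenceSet_le _ _).trans (deleteIncidenceSet_le _ _)) hc))
      (sup _ _ _ (sup _ _ _ hS)) ⟨c, hcS⟩
    omega
  · push Not at hdeg
    obtain ⟨a, b, hab, ha⟩ := hdeg
    have da : degCount G a ≤ 1 := by
      refine (dle G a {b} ?_).trans (by simp)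
      intro y hy
      rw [Finset.mem_singleton]
      by_contra hyb
      exact ha y hyb hy
    have c1 := cnt G a
    have haS := hS _ _ hab
    have hbS : b ∈ S.erase a := Finset.mem_erase.2 ⟨hab.ne.symm, hS _ _ hab.symm⟩
    have k1 := Finset.card_erase_add_one haS
    have := ih (S.erase a).card (by omega) (S.erase a) (G.deleteIncidenceSet a) rfl
      (fun l hl hc => h l hl (hasCycleLen_mono (deleteIncidenceSet_le _ _) hc))
      (sup _ _ _ hS) ⟨b, hbS⟩
    omega

end EvenCyc

/-- Edge bound for graphs with no even cycle. -/
theorem edge_bound_no_even_cycle (n : ℕ) (hn : 1 ≤ n) (G : SimpleGraph (Fin n))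
    (h : ∀ l : ℕ, Even l → ¬ HasCycleLen G l) :
    (edgeCount G : ℝ) ≤ 3 * ((n : ℝ) - 1) / 2 := by
  classical
  have key := EvenCyc.main n Finset.univ G (by simp) h (by simp) ⟨⟨0, hn⟩, by simp⟩
  have key' : 2 * edgeCount G + 3 ≤ 3 * n := by
    simpa using key
  have : (2 * (edgeCount G : ℝ) + 3) ≤ 3 * n := by exact_mod_cast key'
  linarith
end

section
/- Let G be a simple graph on at least two vertices and let v be any vertex of G. Then ρ(G)² ≤ ρ(G−v)² + 2·d(v), where G−v is the graph obtained from G by deleting v (and all edges incident to v), d(v) is the degree of v in G, and ρ denotes the spectral radius. -/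
open SimpleGraph

section Helpers
open Matrix

variable {V : Type} [Fintype V] [DecidableEq V]

lemma specRad_eq_sSup (G : SimpleGraph V) [DecidableRel G.Adj] :
    specRad G = sSup (spectrum ℝ (G.adjMatrix ℝ)) := by
  unfold specRad
  congr!

lemma adj_spec_finite (G : SimpleGraph V) [DecidableRel G.Adj] :
    (spectrum ℝ (G.adjMatrix ℝ)).Finite := by
  rw [← Matrix.spectrum_toLin']
  exact Module.End.finite_spectrum _

lemma adj_isHermitian (G : SimpleGraph V) [DecidableRel G.Adj] :
    (G.adjMatrix ℝ).IsHermitian := by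
  ext i j
  simp [Matrix.conjTranspose_apply, SimpleGraph.adjMatrix_apply, G.adj_comm]

lemma adj_rayleigh (G : SimpleGraph V) [DecidableRel G.Adj] (x : V → ℝ) :
    x ⬝ᵥ (G.adjMatrix ℝ *ᵥ x) ≤ specRad G * (x ⬝ᵥ x) := by
  have hp : (algebraMap ℝ (Matrix V V ℝ) (specRad G) - G.adjMatrix ℝ).PosSemidef := by
    rw [Matrix.posSemidef_iff_isHermitian_and_spectrum_nonneg]
    refine ⟨?_, ?_⟩
    · refine Matrix.IsHermitian.sub ?_ (adj_isHermitian G)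
      simp [Matrix.IsHermitian, Matrix.algebraMap_eq_diagonal, Matrix.diagonal_conjTranspose]
    · rw [← spectrum.singleton_sub_eq]
      rintro _ ⟨a, rfl, b, hb, rfl⟩
      have := le_csSup (adj_spec_finite G).bddAbove hb
      rw [← specRad_eq_sSup] at this
      simpa using this
  have := hp.dotProduct_mulVec_nonneg x
  simp [Matrix.sub_mulVec, Algebra.algebraMap_eq_smul_one, Matrix.smul_mulVec, dotProduct_sub] at this
  linarith

lemma adj_rayleigh_neg (G : SimpleGraph V) [DecidableRel G.Adj] (x : V → ℝ) :
    -(x ⬝ᵥ (G.adjMatrix ℝ *ᵥ x)) ≤ specRad G * (x ⬝ᵥ x) := by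
  have h := adj_rayleigh G (fun i => |x i|)
  have e : (fun i => |x i|) ⬝ᵥ (fun i => |x i|) = x ⬝ᵥ x := by
    simp [dotProduct]
  rw [e] at h
  refine le_trans ?_ h
  simp only [dotProduct, mulVec, Finset.mul_sum, ← Finset.sum_neg_distrib]
  refine Finset.sum_le_sum fun i _ => Finset.sum_le_sum fun j _ => ?_
  rw [SimpleGraph.adjMatrix_apply]
  split_ifs
  · have := neg_abs_le (x i * x j)
    rw [abs_mul] at this
    linarith
  · simp

lemma adj_norm (G : SimpleGraph V) [DecidableRel G.Adj] (y : V → ℝ) :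
    (G.adjMatrix ℝ *ᵥ y) ⬝ᵥ (G.adjMatrix ℝ *ᵥ y) ≤ specRad G ^ 2 * (y ⬝ᵥ y) := by
  have sym : ∀ u w : V → ℝ, u ⬝ᵥ (G.adjMatrix ℝ *ᵥ w) = w ⬝ᵥ (G.adjMatrix ℝ *ᵥ u) := by
    intro u w
    rw [dotProduct_mulVec, ← mulVec_transpose, SimpleGraph.transpose_adjMatrix, dotProduct_comm]
  have key : ∀ u w : V → ℝ, 2 * (u ⬝ᵥ (G.adjMatrix ℝ *ᵥ w)) ≤
      specRad G * (u ⬝ᵥ u + w ⬝ᵥ w) := by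
    intro u w
    have h1 := adj_rayleigh G (u + w)
    have h2 := adj_rayleigh_neg G (u - w)
    simp only [mulVec_add, mulVec_sub, dotProduct_add, dotProduct_sub, add_dotProduct,
      sub_dotProduct] at h1 h2
    rw [sym w u] at h1 h2
    rw [dotProduct_comm w u] at h1 h2
    linarith
  set z := G.adjMatrix ℝ *ᵥ y with hz
  have hz0 : 0 ≤ z ⬝ᵥ z := Finset.sum_nonneg fun i _ => mul_self_nonneg _
  have h1 := key z (specRad G • y)
  rw [mulVec_smul, ← hz] at h1
  simp only [dotProduct_smul, smul_dotProduct, smul_eq_mul] at h1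
  have h2 := key z y
  rw [← hz] at h2
  rcases lt_trichotomy (specRad G) 0 with h | h | h
  · have hy0 : 0 ≤ y ⬝ᵥ y := Finset.sum_nonneg fun i _ => mul_self_nonneg _
    nlinarith [mul_nonneg (sq_nonneg (specRad G)) hy0,
      mul_nonneg (neg_nonneg.2 h.le) (add_nonneg hz0 hy0)]
  · rw [h] at h2 ⊢
    linarith
  · by_contra! hc
    nlinarith [mul_pos h (sub_pos.2 hc)]

lemma adj_exists_eig [Nonempty V] (G : SimpleGraph V) [DecidableRel G.Adj] :
    ∃ x : V → ℝ, x ≠ 0 ∧ G.adjMatrix ℝ *ᵥ x = specRad G • x := by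
  have hne : (spectrum ℝ (G.adjMatrix ℝ)).Nonempty := by
    obtain ⟨i⟩ := ‹Nonempty V›
    exact ⟨_, (adj_isHermitian G).eigenvalues_mem_spectrum_real i⟩
  have hm := hne.csSup_mem (adj_spec_finite G)
  rw [← specRad_eq_sSup, ← Matrix.spectrum_toLin', ← Module.End.hasEigenvalue_iff_mem_spectrum] at hm
  obtain ⟨x, hx⟩ := hm.exists_hasEigenvector
  exact ⟨x, hx.2, by simpa using hx.apply_eq_smul⟩

end Helpers

/-- Lemma 4.6: `ρ(G)² ≤ ρ(G - v)² + 2·d(v)`. -/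
theorem specRad_sq_le_delete_vertex (n : ℕ) (hn : 2 ≤ n) (G : SimpleGraph (Fin n))
    (v : Fin n) :
    specRad G ^ 2 ≤
      specRad (G.induce {u : Fin n | u ≠ v}) ^ 2 + 2 * (degCount G v : ℝ) := by
  classical
  haveI : Nonempty (Fin n) := ⟨v⟩
  obtain ⟨x, hx0, hx⟩ := adj_exists_eig G
  set ρ := specRad G with hρ
  set S : Set (Fin n) := {u : Fin n | u ≠ v} with hS
  set H := G.induce S with hH
  have hN := adj_norm H (fun u => x u.1)
  set r := specRad H with hr
  have split : ∀ f : Fin n → ℝ, ∑ i, f i = f v + ∑ i : S, f i.1 :=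
    fun f => Fintype.sum_eq_add_sum_subtype_ne f v
  let b : Fin n → ℝ := fun u => if G.Adj v u then 1 else 0
  have hbv : b v = 0 := by simp [b]
  have hd : ∑ u : S, b u.1 * b u.1 = (degCount G v : ℝ) := by
    have h1 := split (fun u => b u * b u)
    rw [hbv] at h1
    have h2 : ∑ u, b u * b u = (degCount G v : ℝ) := by
      unfold degCount
      rw [Nat.card_eq_fintype_card, SimpleGraph.card_neighborSet_eq_degree,
        ← SimpleGraph.card_neighborFinset_eq_degree, SimpleGraph.neighborFinset_eq_filter]
      rw [Finset.card_filter, Nat.cast_sum]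
      refine Finset.sum_congr rfl fun u _ => ?_
      by_cases h : G.Adj v u <;> simp [b, h]
    linarith
  have hs : ∑ u : S, b u.1 * x u.1 = ρ * x v := by
    have h1 := split (fun u => b u * x u)
    have h2 := congrFun hx v
    simp only [Matrix.mulVec, dotProduct, SimpleGraph.adjMatrix_apply, Pi.smul_apply,
      smul_eq_mul] at h2
    rw [hbv] at h1
    change ∑ u, b u * x u = _ at h2
    linarith
  have hB : ∀ u : S, (H.adjMatrix ℝ).mulVec (fun u => x u.1) u = ρ * x u.1 - x v * b u.1 := by
    intro u
    have h2 := congrFun hx u.1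
    simp only [Matrix.mulVec, dotProduct, SimpleGraph.adjMatrix_apply, Pi.smul_apply,
      smul_eq_mul] at h2 ⊢
    rw [split] at h2
    have h3 : (if G.Adj u.1 v then (1 : ℝ) else 0) = b u.1 := by
      simp [b, G.adj_comm]
    rw [h3] at h2
    have h4 : ∑ i : S, (if H.Adj u i then (1 : ℝ) else 0) * x i.1 =
        ∑ i : S, (if G.Adj u.1 i.1 then (1 : ℝ) else 0) * x i.1 := by
      simp [hH]
    rw [h4]
    linarith
  have hCS := Finset.sum_mul_sq_le_sq_mul_sq Finset.univ (fun u : S => b u.1) (fun u : S => x u.1)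
  simp only [pow_two (b _), hd, hs] at hCS
  have hY : ∑ u : S, x u.1 ^ 2 = (fun u : S => x u.1) ⬝ᵥ (fun u : S => x u.1) := by
    simp [dotProduct, pow_two]
  rw [hY] at hCS
  have hE : (H.adjMatrix ℝ).mulVec (fun u => x u.1) ⬝ᵥ (H.adjMatrix ℝ).mulVec (fun u => x u.1) =
      ρ ^ 2 * ((fun u : S => x u.1) ⬝ᵥ (fun u : S => x u.1)) - 2 * ρ * x v * (ρ * x v)
        + x v ^ 2 * (degCount G v : ℝ) := by
    rw [← hY, ← hs, ← hd, dotProduct, Finset.mul_sum, Finset.mul_sum, Finset.mul_sum,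
      ← Finset.sum_sub_distrib, ← Finset.sum_add_distrib]
    refine Finset.sum_congr rfl fun u _ => ?_
    rw [hB]
    ring
  rw [hE] at hN
  set Y := (fun u : S => x u.1) ⬝ᵥ (fun u : S => x u.1) with hYdef
  have hY0 : 0 ≤ Y := by rw [← hY]; positivity
  have hD0 : (0 : ℝ) ≤ degCount G v := Nat.cast_nonneg _
  rcases hY0.eq_or_lt with h0 | hpos
  · have hxv : x v ≠ 0 := by
      intro hv
      apply hx0
      funext u
      by_cases huv : u = v
      · rw [huv, hv]; rfl
      · rw [← h0] at hY
        have := (Finset.sum_eq_zero_iff_of_nonneg (fun i _ => sq_nonneg _)).1 hY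
          ⟨u, huv⟩ (Finset.mem_univ _)
        simpa using this
    rw [← h0, mul_zero] at hCS
    have : ρ * x v = 0 := by
      apply pow_eq_zero_iff (two_ne_zero) |>.1
      exact le_antisymm hCS (sq_nonneg _)
    have hρ0 : ρ = 0 := (mul_eq_zero.1 this).resolve_right hxv
    rw [hρ0]
    nlinarith [sq_nonneg r]
  · have h5 : 0 ≤ x v ^ 2 * (degCount G v : ℝ) := by positivity
    by_contra! hc
    nlinarith [mul_pos hpos (sub_pos.2 hc)]
end
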